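/- arXiv:1803.04208 — 2 statements merged into one kernel-verified Lean document; each statement's English description precedes it below -/
import Mathlib

section
/- Let k > 0, let d ∈ ℝ² be a unit vector, let M ∈ ℕ, and let a₁, …, a_M ∈ ℂ and c₁, …, c_M ∈ ℝ². Define the leading-order far-field model ψ∞(θ) = Σ_{m=1}^{M} a_m exp(i k d · c_m) exp(−i k θ · c_m) for θ ∈ S¹. Then for every x ∈ ℝ², ∫₀^{2π} ψ∞(θ(t)) exp(i k θ(t) · x) dt = 2π Σ_{m=1}^{M} a_m exp(i k d · c_m) J₀(k‖x − c_m‖). -/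
/-!
By linearity it suffices to evaluate `∫₀^{2π} exp(i k θ(t) · y) dt` for `y = x - c_m`. Writing `y` in
polar coordinates gives `θ(t) · y = ‖y‖ cos (t - φ)`, and by periodicity the shift `φ` may be dropped
(`integral_exp_uc`). What remains is Bessel's integral `∫₀^{2π} exp(i z cos t) dt = 2π J₀(z)`
(`integral_exp_cos`): expand the exponential, integrate termwise by dominated convergence, and insert
the moments of the cosine, which vanish in odd degree and equal `2π (2m)! / (4^m (m!)²)` in degree
`2m` by the reduction formula.
-/

open scoped Real
open RealInnerProductSpace

/-- Bessel function of the first kind of integer order `n`. -/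
noncomputable def besselJ (n : ℕ) (z : ℝ) : ℝ :=
  ∑' m : ℕ, (-1 : ℝ) ^ m / (Nat.factorial m * Nat.factorial (m + n)) * (z / 2) ^ (2 * m + n)

/-- Parametrization of the unit circle in ℝ². -/
noncomputable def uc (t : ℝ) : EuclideanSpace ℝ (Fin 2) :=
  (WithLp.equiv 2 (Fin 2 → ℝ)).symm ![Real.cos t, Real.sin t]

lemma integral_cos_pow_two_mul (m : ℕ) :
    ∫ t in (0:ℝ)..(2 * π), Real.cos t ^ (2 * m) =
      2 * π * ((2 * m).factorial / (4 ^ m * (m.factorial : ℝ) ^ 2)) := by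
  induction m with
  | zero => simp
  | succ m ih =>
    rw [show 2 * (m + 1) = 2 * m + 2 by ring, integral_cos_pow, ih]
    have h1 : (m.factorial : ℝ) ≠ 0 := by positivity
    have h2 : (m : ℝ) + 1 ≠ 0 := by positivity
    simp only [Nat.factorial_succ, Real.sin_two_pi, Real.sin_zero]
    push_cast
    field_simp
    ring

lemma integral_cos_pow_two_mul_add_one (m : ℕ) :
    ∫ t in (0:ℝ)..(2 * π), Real.cos t ^ (2 * m + 1) = 0 := by
  induction m with
  | zero => simp
  | succ m ih =>
    rw [show 2 * (m + 1) + 1 = (2 * m + 1) + 2 by ring, integral_cos_pow, ih]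
    simp

lemma hasSum_integral_exp_cos (z : ℝ) :
    HasSum (fun n : ℕ => (Complex.I * z) ^ n / (n.factorial : ℂ) *
        ((∫ t in (0:ℝ)..(2 * π), Real.cos t ^ n : ℝ) : ℂ))
      (∫ t in (0:ℝ)..(2 * π), Complex.exp (Complex.I * z * (Real.cos t : ℝ))) := by
  have key : HasSum (fun n : ℕ => ∫ t in (0:ℝ)..(2 * π),
        (Complex.I * z) ^ n / (n.factorial : ℂ) * ((Real.cos t ^ n : ℝ) : ℂ))
      (∫ t in (0:ℝ)..(2 * π), Complex.exp (Complex.I * z * (Real.cos t : ℝ))) := by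
    refine intervalIntegral.hasSum_integral_of_dominated_convergence
      (fun n _ => |z| ^ n / (n.factorial : ℝ)) (fun n => ?_) (fun n => ?_) ?_ ?_ ?_
    · exact Continuous.aestronglyMeasurable (by fun_prop)
    · refine Filter.Eventually.of_forall fun t _ => ?_
      rw [norm_mul, norm_div, norm_pow, norm_mul, Complex.norm_I, one_mul, Complex.norm_real,
        Complex.norm_real, Complex.norm_natCast, Real.norm_eq_abs, Real.norm_eq_abs, abs_pow]
      exact mul_le_of_le_one_right (by positivity)
        (pow_le_one₀ (abs_nonneg _) (Real.abs_cos_le_one t))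
    · exact Filter.Eventually.of_forall fun t _ => Real.summable_pow_div_factorial |z|
    · exact intervalIntegrable_const
    · refine Filter.Eventually.of_forall fun t _ => ?_
      rw [Complex.exp_eq_exp_ℂ]
      refine (NormedSpace.expSeries_div_hasSum_exp (𝔸 := ℂ)
        (Complex.I * z * (Real.cos t : ℝ))).congr_fun fun n => ?_
      rw [mul_pow _ ((Real.cos t : ℝ) : ℂ)]
      push_cast
      ring
  convert key using 2 with n
  rw [intervalIntegral.integral_const_mul, intervalIntegral.integral_ofReal]

/-- Bessel's integral representation of `J₀`. -/
lemma integral_exp_cos (z : ℝ) :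
    ∫ t in (0:ℝ)..(2 * π), Complex.exp (Complex.I * z * (Real.cos t : ℝ)) =
      2 * π * ((besselJ 0 z : ℝ) : ℂ) := by
  have h := hasSum_integral_exp_cos z
  have hinj : Function.Injective (fun m : ℕ => 2 * m) := fun a b hab => by
    simpa using hab
  -- only the even-degree terms contribute
  rw [← hinj.hasSum_iff] at h
  · rw [← h.tsum_eq, besselJ, Complex.ofReal_tsum, ← tsum_mul_left]
    refine tsum_congr fun m => ?_
    simp only [Function.comp_apply, integral_cos_pow_two_mul, add_zero]
    have h1 : (m.factorial : ℂ) ≠ 0 := by exact_mod_cast m.factorial_ne_zero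
    have h2 : ((2 * m).factorial : ℂ) ≠ 0 := by exact_mod_cast (2 * m).factorial_ne_zero
    rw [mul_pow, pow_mul Complex.I, Complex.I_sq]
    push_cast
    rw [div_pow, pow_mul (2 : ℂ), show (2 : ℂ) ^ 2 = 4 by norm_num]
    field_simp
  · intro n hn
    obtain ⟨m, rfl | rfl⟩ := Nat.even_or_odd' n
    · exact absurd ⟨m, rfl⟩ hn
    · rw [integral_cos_pow_two_mul_add_one]
      simp

lemma exists_inner_uc_eq (y : EuclideanSpace ℝ (Fin 2)) :
    ∃ φ : ℝ, ∀ t : ℝ, (⟪uc t, y⟫ : ℝ) = ‖y‖ * Real.cos (t - φ) := by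
  refine ⟨Complex.arg ⟨y 0, y 1⟩, fun t => ?_⟩
  have hn : ‖y‖ = ‖(⟨y 0, y 1⟩ : ℂ)‖ := by
    rw [EuclideanSpace.norm_eq, Complex.norm_eq_sqrt_sq_add_sq]
    simp [Fin.sum_univ_two]
  have h0 := Complex.norm_mul_cos_arg ⟨y 0, y 1⟩
  have h1 := Complex.norm_mul_sin_arg ⟨y 0, y 1⟩
  rw [hn, Real.cos_sub]
  simp only at h0 h1
  have hi : (⟪uc t, y⟫ : ℝ) = Real.cos t * y 0 + Real.sin t * y 1 := by
    simp [uc, PiLp.inner_apply, Fin.sum_univ_two, mul_comm]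
  rw [hi]
  linear_combination (-Real.cos t) * h0 - Real.sin t * h1

/-- The Fourier transform of arc length on the unit circle, at the frequency `k y`. -/
lemma integral_exp_uc (k : ℝ) (y : EuclideanSpace ℝ (Fin 2)) :
    ∫ t in (0:ℝ)..(2 * π), Complex.exp (Complex.I * k * (⟪uc t, y⟫ : ℝ)) =
      2 * π * ((besselJ 0 (k * ‖y‖) : ℝ) : ℂ) := by
  obtain ⟨φ, hφ⟩ := exists_inner_uc_eq y
  rw [← integral_exp_cos]
  set f : ℝ → ℂ := fun t => Complex.exp (Complex.I * (k * ‖y‖ : ℝ) * (Real.cos t : ℝ)) with hf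
  have hper : Function.Periodic f (2 * π) := fun t => by simp only [hf, Real.cos_add_two_pi]
  calc ∫ t in (0:ℝ)..(2 * π), Complex.exp (Complex.I * k * (⟪uc t, y⟫ : ℝ))
      = ∫ t in (0:ℝ)..(2 * π), f (t - φ) := by
        refine intervalIntegral.integral_congr fun t _ => ?_
        simp only [hf, hφ]
        congr 1
        push_cast
        ring
    _ = ∫ t in (0 - φ)..(2 * π - φ), f t := intervalIntegral.integral_comp_sub_right f φ
    _ = ∫ t in (0:ℝ)..(2 * π), f t := by
        have := hper.intervalIntegral_add_eq (0 - φ) 0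
        rwa [zero_add, show 0 - φ + 2 * π = 2 * π - φ by ring] at this

lemma continuous_uc : Continuous uc := by
  unfold uc
  refine (PiLp.continuous_toLp 2 _).comp ?_
  refine continuous_pi fun i => ?_
  fin_cases i
  · exact Real.continuous_cos
  · exact Real.continuous_sin

/-- for the leading-order far-field model,
∫₀^{2π} ψ∞(θ(t)) exp(i k θ(t)·x) dt = 2π Σ_m a_m exp(i k d·c_m) J₀(k‖x − c_m‖). -/
theorem integral_farField_leadingOrder (k : ℝ) (hk : 0 < k)
    (d : EuclideanSpace ℝ (Fin 2)) (hd : ‖d‖ = 1)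
    (M : ℕ) (a : Fin M → ℂ) (c : Fin M → EuclideanSpace ℝ (Fin 2))
    (ψ : EuclideanSpace ℝ (Fin 2) → ℂ)
    (hψ : ∀ θ : EuclideanSpace ℝ (Fin 2), ψ θ =
      ∑ m, a m * Complex.exp (Complex.I * k * (⟪d, c m⟫ : ℝ)) *
        Complex.exp (-(Complex.I * k * (⟪θ, c m⟫ : ℝ))))
    (x : EuclideanSpace ℝ (Fin 2)) :
    (∫ t in (0:ℝ)..(2*π), ψ (uc t) * Complex.exp (Complex.I * k * (⟪uc t, x⟫ : ℝ)))
      = 2 * π * ∑ m, a m * Complex.exp (Complex.I * k * (⟪d, c m⟫ : ℝ)) *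
          ((besselJ 0 (k * ‖x - c m‖) : ℝ) : ℂ) := by
  have hcont := continuous_uc
  have hint : ∀ t : ℝ, ψ (uc t) * Complex.exp (Complex.I * k * (⟪uc t, x⟫ : ℝ)) =
      ∑ m, a m * Complex.exp (Complex.I * k * (⟪d, c m⟫ : ℝ)) *
        Complex.exp (Complex.I * k * (⟪uc t, x - c m⟫ : ℝ)) := fun t => by
    rw [hψ, Finset.sum_mul]
    refine Finset.sum_congr rfl fun m _ => ?_
    rw [mul_assoc, ← Complex.exp_add, inner_sub_right]
    congr 2
    push_cast
    ring
  simp only [hint]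
  rw [intervalIntegral.integral_finsetSum, Finset.mul_sum]
  · refine Finset.sum_congr rfl fun m _ => ?_
    rw [intervalIntegral.integral_const_mul, integral_exp_uc]
    ring
  · intro m _
    refine Continuous.intervalIntegrable ?_ _ _
    have : Continuous fun t => (⟪uc t, x - c m⟫ : ℝ) := hcont.inner continuous_const
    fun_prop
end

section
/- Let k > 0, ℓ > 0 with ℓ ≠ 2, let d ∈ ℝ² be a unit vector, let M ∈ ℕ, let c₁, …, c_M ∈ ℝ², and let t₁, …, t_M ∈ ℝ² be unit vectors. Define the second-order far-field model ψ∞(θ) = Σ_{m=1}^{M} [ (2π/ln(ℓ/2)) exp(i k d · c_m) exp(−i k θ · c_m) − π ℓ² (i k (d · t_m)) exp(i k d · c_m) (−i k (θ · t_m)) exp(−i k θ · c_m) ] for θ ∈ S¹. Then for every x ∈ ℝ² with x ≠ c_m for all m, ∫₀^{2π} ψ∞(θ(τ)) exp(i k θ(τ) · x) dτ = (2π)²/ln(ℓ/2) Σ_{m=1}^{M} exp(i k d · c_m) J₀(k‖x − c_m‖) − 2π² k² ℓ² i Σ_{m=1}^{M} (d · t_m) exp(i k d · c_m) (((x − c_m)/‖x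 − c_m‖) · t_m) J₁(k‖x − c_m‖). -/
/-!
With `y = x - c m`, each summand of the integrand is a constant times `exp (i k θ·y)` or
`(θ·t) exp (i k θ·y)`. Writing `y = ‖y‖ (cos a, sin a)` and shifting the integration variable
by the polar angle `a` (`integral_uc_shift`) turns `θ·y` into `‖y‖ cos τ` and `θ·t` into
`(e·t) cos τ + (e⊥·t) sin τ` with `e = y / ‖y‖`. The sine part integrates to zero by the symmetry
`τ ↦ 2π - τ`, so the statement reduces to the two Bessel integrals
`∫ exp (i z cos τ) = 2π J₀(z)` and `∫ cos τ exp (i z cos τ) = 2π i J₁(z)`. These follow by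
integrating the exponential series termwise (`hasSum_integral_cos_pow_mul_cexp`) and inserting the
moments `∫ cos²ᵐ = 2π (2m)! / (4ᵐ m!²)`, `∫ cos²ᵐ⁺¹ = 0`.
-/

open scoped Real
open RealInnerProductSpace

/-! ### Moments of the cosine over a full period -/

lemma integral_cos_pow_add_two (n : ℕ) :
    ∫ τ in (0:ℝ)..(2*π), Real.cos τ ^ (n + 2)
      = (n + 1) / (n + 2) * ∫ τ in (0:ℝ)..(2*π), Real.cos τ ^ n := by
  rw [integral_cos_pow]
  simp

lemma integral_cos_pow_even (m : ℕ) :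
    ∫ τ in (0:ℝ)..(2*π), Real.cos τ ^ (2 * m)
      = 2 * π * ((2 * m).factorial / (4 ^ m * (m.factorial : ℝ) ^ 2)) := by
  induction m with
  | zero => simp
  | succ m ih =>
    rw [show 2 * (m + 1) = 2 * m + 2 by ring, integral_cos_pow_add_two, ih,
      Nat.factorial_succ (2 * m + 1), Nat.factorial_succ (2 * m), Nat.factorial_succ m]
    have h := Nat.factorial_ne_zero m
    push_cast
    field_simp
    ring

lemma integral_cos_pow_odd (m : ℕ) :
    ∫ τ in (0:ℝ)..(2*π), Real.cos τ ^ (2 * m + 1) = 0 := by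
  induction m with
  | zero => simp
  | succ m ih =>
    rw [show 2 * (m + 1) + 1 = (2 * m + 1) + 2 by ring, integral_cos_pow_add_two, ih, mul_zero]

/-! ### Integral representations of the Bessel functions -/

/-- Termwise integration of the exponential series; the case `p = 0` gives `J₀` and `p = 1`
gives `J₁`. -/
lemma hasSum_integral_cos_pow_mul_cexp (p : ℕ) (z : ℝ) :
    HasSum (fun n : ℕ => (Complex.I * z) ^ n / n.factorial *
        ((∫ τ in (0:ℝ)..(2*π), Real.cos τ ^ (n + p) : ℝ) : ℂ))
      (∫ τ in (0:ℝ)..(2*π), (Real.cos τ : ℂ) ^ p *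
        Complex.exp (Complex.I * z * (Real.cos τ : ℂ))) := by
  have key := intervalIntegral.hasSum_integral_of_dominated_convergence
    (μ := MeasureTheory.volume) (a := 0) (b := 2 * π)
    (F := fun (n : ℕ) (τ : ℝ) => (Complex.I * z) ^ n / n.factorial * (Real.cos τ : ℂ) ^ (n + p))
    (f := fun τ : ℝ => (Real.cos τ : ℂ) ^ p * Complex.exp (Complex.I * z * (Real.cos τ : ℂ)))
    (fun n _ => |z| ^ n / n.factorial) ?_ ?_ ?_ ?_ ?_
  · refine (congrArg (HasSum · _) (funext fun n => ?_)).mpr key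
    rw [intervalIntegral.integral_const_mul, ← intervalIntegral.integral_ofReal]
    simp only [Complex.ofReal_pow]
  · intro n
    exact (by fun_prop : Continuous fun τ : ℝ => (Complex.I * z) ^ n / n.factorial *
      (Real.cos τ : ℂ) ^ (n + p)).aestronglyMeasurable
  · intro n
    refine Filter.Eventually.of_forall fun τ _ => ?_
    have h1 : |Real.cos τ| ^ (n + p) ≤ 1 := pow_le_one₀ (abs_nonneg _) (Real.abs_cos_le_one τ)
    simp only [norm_mul, norm_div, norm_pow, Complex.norm_I, one_mul, Complex.norm_real,
      Real.norm_eq_abs, Complex.norm_natCast]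
    exact mul_le_of_le_one_right (by positivity) h1
  · exact Filter.Eventually.of_forall fun τ _ => Real.summable_pow_div_factorial |z|
  · simp
  · refine Filter.Eventually.of_forall fun τ _ => ?_
    have h := (NormedSpace.expSeries_div_hasSum_exp (Complex.I * z * (Real.cos τ : ℂ))).mul_left
      ((Real.cos τ : ℂ) ^ p)
    rw [← Complex.exp_eq_exp_ℂ] at h
    refine (congrArg (HasSum · _) (funext fun n => ?_)).mpr h
    rw [mul_pow, pow_add]
    ring

lemma integral_cexp_cos (z : ℝ) :
    ∫ τ in (0:ℝ)..(2*π), Complex.exp (Complex.I * z * (Real.cos τ : ℂ))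
      = 2 * π * (besselJ 0 z : ℂ) := by
  have h := hasSum_integral_cos_pow_mul_cexp 0 z
  simp only [pow_zero, one_mul, add_zero] at h
  -- Only the even powers contribute.
  have hinj : Function.Injective fun m : ℕ => 2 * m := fun a b hab => by simpa using hab
  rw [← hinj.hasSum_iff] at h
  · rw [← h.tsum_eq, besselJ, Complex.ofReal_tsum, ← tsum_mul_left]
    refine tsum_congr fun m => ?_
    rw [Function.comp_apply, integral_cos_pow_even, mul_pow, pow_mul Complex.I, Complex.I_sq]
    have h1 := Nat.factorial_ne_zero m
    have h2 := Nat.factorial_ne_zero (2 * m)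
    push_cast
    rw [add_zero, add_zero, div_pow, pow_mul (2 : ℂ)]
    field_simp
    norm_num
  · intro n hn
    obtain ⟨m, rfl | rfl⟩ := n.even_or_odd'
    · exact absurd ⟨m, rfl⟩ hn
    · rw [integral_cos_pow_odd]; simp

lemma integral_cos_mul_cexp_cos (z : ℝ) :
    ∫ τ in (0:ℝ)..(2*π), (Real.cos τ : ℂ) * Complex.exp (Complex.I * z * (Real.cos τ : ℂ))
      = 2 * π * Complex.I * (besselJ 1 z : ℂ) := by
  have h := hasSum_integral_cos_pow_mul_cexp 1 z
  simp only [pow_one] at h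
  -- Only the odd terms of the exponential series contribute.
  have hinj : Function.Injective fun m : ℕ => 2 * m + 1 := fun a b hab => by simpa using hab
  rw [← hinj.hasSum_iff] at h
  · rw [← h.tsum_eq, besselJ, Complex.ofReal_tsum, ← tsum_mul_left]
    refine tsum_congr fun m => ?_
    simp only [Function.comp_apply]
    rw [show 2 * m + 1 + 1 = 2 * (m + 1) by ring, integral_cos_pow_even]
    rw [show 2 * (m + 1) = 2 * m + 1 + 1 by ring, Nat.factorial_succ (2 * m + 1),
      Nat.factorial_succ m, mul_pow, pow_succ Complex.I, pow_mul Complex.I, Complex.I_sq]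
    have h1 := Nat.factorial_ne_zero m
    have h2 := Nat.factorial_ne_zero (2 * m + 1)
    have h3 : (m : ℂ) + 1 ≠ 0 := by exact_mod_cast m.succ_ne_zero
    push_cast
    rw [div_pow, pow_succ (2 : ℂ), pow_mul (2 : ℂ), pow_succ (4 : ℂ)]
    norm_num
    field_simp
    ring
  · intro n hn
    obtain ⟨m, rfl | rfl⟩ := n.even_or_odd'
    · rw [integral_cos_pow_odd]; simp
    · exact absurd ⟨m, rfl⟩ hn

lemma integral_sin_mul_cexp_cos (z : ℝ) :
    ∫ τ in (0:ℝ)..(2*π), (Real.sin τ : ℂ) * Complex.exp (Complex.I * z * (Real.cos τ : ℂ))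
      = 0 := by
  have h := intervalIntegral.integral_comp_sub_left (a := 0) (b := 2 * π)
    (fun τ : ℝ => (Real.sin τ : ℂ) * Complex.exp (Complex.I * z * (Real.cos τ : ℂ))) (2 * π)
  simp only [Real.sin_two_pi_sub, Real.cos_two_pi_sub, Complex.ofReal_neg, neg_mul,
    intervalIntegral.integral_neg, sub_self, sub_zero] at h
  exact self_eq_neg.mp h.symm

/-! ### Plane-wave integrals over the circle -/

lemma inner_uc (τ : ℝ) (v : EuclideanSpace ℝ (Fin 2)) :
    (⟪uc τ, v⟫ : ℝ) = Real.cos τ * v 0 + Real.sin τ * v 1 := by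
  simp [uc, PiLp.inner_apply, Fin.sum_univ_two, mul_comm]

lemma exists_eq_norm_smul_uc (y : EuclideanSpace ℝ (Fin 2)) : ∃ a : ℝ, y = ‖y‖ • uc a := by
  have hn : ‖(⟨y 0, y 1⟩ : ℂ)‖ = ‖y‖ := by
    rw [EuclideanSpace.norm_eq, Fin.sum_univ_two, Complex.norm_def, Complex.normSq_mk]
    simp [sq]
  refine ⟨Complex.arg ⟨y 0, y 1⟩, ?_⟩
  have h1 := Complex.norm_mul_cos_arg (⟨y 0, y 1⟩ : ℂ)
  have h2 := Complex.norm_mul_sin_arg (⟨y 0, y 1⟩ : ℂ)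
  rw [hn] at h1 h2
  ext i
  fin_cases i
  · simpa [uc] using h1.symm
  · simpa [uc] using h2.symm

lemma uc_add_two_pi (τ : ℝ) : uc (τ + 2 * π) = uc τ := by
  simp [uc]

/-- The parametrization has period `2π`, so its starting angle is irrelevant. -/
lemma integral_uc_shift (f : EuclideanSpace ℝ (Fin 2) → ℂ) (a : ℝ) :
    ∫ τ in (0:ℝ)..(2*π), f (uc τ) = ∫ τ in (0:ℝ)..(2*π), f (uc (τ + a)) := by
  have hp : Function.Periodic (fun τ => f (uc τ)) (2 * π) := fun τ => by
    simp only [uc_add_two_pi]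
  have h := hp.intervalIntegral_add_eq 0 a
  rw [zero_add] at h
  rw [h, intervalIntegral.integral_comp_add_right (fun τ => f (uc τ)), zero_add, add_comm a]

lemma inner_uc_add_uc (τ a : ℝ) : (⟪uc (τ + a), uc a⟫ : ℝ) = Real.cos τ := by
  rw [inner_uc]
  have h := Real.cos_sub (τ + a) a
  rw [add_sub_cancel_right] at h
  simpa [uc] using h.symm

/-- Decomposition of `θ·t` along `e = uc a` and the perpendicular direction. -/
lemma inner_uc_add (τ a : ℝ) (t : EuclideanSpace ℝ (Fin 2)) :
    (⟪uc (τ + a), t⟫ : ℝ)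
      = ⟪uc a, t⟫ * Real.cos τ + (Real.cos a * t 1 - Real.sin a * t 0) * Real.sin τ := by
  rw [inner_uc, inner_uc, Real.cos_add, Real.sin_add]
  ring

lemma integral_planeWave (k : ℝ) (y : EuclideanSpace ℝ (Fin 2)) :
    ∫ τ in (0:ℝ)..(2*π), Complex.exp (Complex.I * k * (⟪uc τ, y⟫ : ℝ))
      = 2 * π * (besselJ 0 (k * ‖y‖) : ℂ) := by
  obtain ⟨a, ha⟩ := exists_eq_norm_smul_uc y
  rw [integral_uc_shift (fun θ => Complex.exp (Complex.I * k * (⟪θ, y⟫ : ℝ))) a,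
    ← integral_cexp_cos]
  refine intervalIntegral.integral_congr fun τ _ => ?_
  have h : (⟪uc (τ + a), y⟫ : ℝ) = ‖y‖ * Real.cos τ := by
    conv_lhs => rw [ha]
    rw [inner_smul_right, inner_uc_add_uc]
  simp only [h]
  push_cast
  ring_nf

lemma integral_inner_mul_planeWave (k : ℝ) (y t : EuclideanSpace ℝ (Fin 2)) (hy : y ≠ 0) :
    ∫ τ in (0:ℝ)..(2*π), ((⟪uc τ, t⟫ : ℝ) : ℂ) * Complex.exp (Complex.I * k * (⟪uc τ, y⟫ : ℝ))
      = 2 * π * Complex.I * ((⟪‖y‖⁻¹ • y, t⟫ : ℝ) : ℂ) * (besselJ 1 (k * ‖y‖) : ℂ) := by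
  obtain ⟨a, ha⟩ := exists_eq_norm_smul_uc y
  have he : ‖y‖⁻¹ • y = uc a := (inv_smul_eq_iff₀ (norm_ne_zero_iff.mpr hy)).mpr ha
  rw [integral_uc_shift
    (fun θ => ((⟪θ, t⟫ : ℝ) : ℂ) * Complex.exp (Complex.I * k * (⟪θ, y⟫ : ℝ))) a, he]
  have h (τ : ℝ) : (⟪uc (τ + a), y⟫ : ℝ) = ‖y‖ * Real.cos τ := by
    conv_lhs => rw [ha]
    rw [inner_smul_right, inner_uc_add_uc]
  have hsplit (τ : ℝ) : ((⟪uc (τ + a), t⟫ : ℝ) : ℂ) *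
        Complex.exp (Complex.I * k * (⟪uc (τ + a), y⟫ : ℝ))
      = ((⟪uc a, t⟫ : ℝ) : ℂ) * ((Real.cos τ : ℂ) *
          Complex.exp (Complex.I * (k * ‖y‖ : ℝ) * (Real.cos τ : ℂ)))
        + ((Real.cos a * t 1 - Real.sin a * t 0 : ℝ) : ℂ) * ((Real.sin τ : ℂ) *
          Complex.exp (Complex.I * (k * ‖y‖ : ℝ) * (Real.cos τ : ℂ))) := by
    rw [h, inner_uc_add,
      show Complex.I * k * ((‖y‖ * Real.cos τ : ℝ) : ℂ)
        = Complex.I * (k * ‖y‖ : ℝ) * (Real.cos τ : ℂ) by push_cast; ring,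
      Complex.ofReal_add, Complex.ofReal_mul, Complex.ofReal_mul]
    ring
  simp only [hsplit]
  rw [intervalIntegral.integral_add
      (Continuous.intervalIntegrable (by fun_prop) _ _)
      (Continuous.intervalIntegrable (by fun_prop) _ _),
    intervalIntegral.integral_const_mul, intervalIntegral.integral_const_mul,
    integral_cos_mul_cexp_cos, integral_sin_mul_cexp_cos]
  ring

/-- for the second-order far-field model,
∫₀^{2π} ψ∞(θ(τ)) exp(i k θ(τ)·x) dτ
  = (2π)²/ln(ℓ/2) Σ_m e^{ikd·c_m} J₀(k‖x−c_m‖)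
    − 2π²k²ℓ²i Σ_m (d·t_m) e^{ikd·c_m} (((x−c_m)/‖x−c_m‖)·t_m) J₁(k‖x−c_m‖). -/
theorem integral_farField_secondOrder (k ℓ : ℝ) (hk : 0 < k) (hℓ : 0 < ℓ) (hℓ2 : ℓ ≠ 2)
    (d : EuclideanSpace ℝ (Fin 2)) (hd : ‖d‖ = 1)
    (M : ℕ) (c tv : Fin M → EuclideanSpace ℝ (Fin 2)) (htv : ∀ m, ‖tv m‖ = 1)
    (ψ : EuclideanSpace ℝ (Fin 2) → ℂ)
    (hψ : ∀ θ : EuclideanSpace ℝ (Fin 2), ψ θ =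
      ∑ m, (((2 * π / Real.log (ℓ / 2) : ℝ) : ℂ) *
              Complex.exp (Complex.I * k * (⟪d, c m⟫ : ℝ)) *
              Complex.exp (-(Complex.I * k * (⟪θ, c m⟫ : ℝ)))
            - ((π * ℓ ^ 2 : ℝ) : ℂ) *
              (Complex.I * k * ((⟪d, tv m⟫ : ℝ) : ℂ)) *
              Complex.exp (Complex.I * k * (⟪d, c m⟫ : ℝ)) *
              (-(Complex.I * k * ((⟪θ, tv m⟫ : ℝ) : ℂ))) *
              Complex.exp (-(Complex.I * k * (⟪θ, c m⟫ : ℝ)))))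
    (x : EuclideanSpace ℝ (Fin 2)) (hx : ∀ m, x ≠ c m) :
    (∫ τ in (0:ℝ)..(2*π), ψ (uc τ) * Complex.exp (Complex.I * k * (⟪uc τ, x⟫ : ℝ)))
      = (((2 * π) ^ 2 / Real.log (ℓ / 2) : ℝ) : ℂ) *
          ∑ m, Complex.exp (Complex.I * k * (⟪d, c m⟫ : ℝ)) *
            ((besselJ 0 (k * ‖x - c m‖) : ℝ) : ℂ)
        - ((2 * π ^ 2 * k ^ 2 * ℓ ^ 2 : ℝ) : ℂ) * Complex.I *
          ∑ m, ((⟪d, tv m⟫ : ℝ) : ℂ) * Complex.exp (Complex.I * k * (⟪d, c m⟫ : ℝ)) *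
            ((⟪‖x - c m‖⁻¹ • (x - c m), tv m⟫ : ℝ) : ℂ) *
            ((besselJ 1 (k * ‖x - c m‖) : ℝ) : ℂ) := by
  have hu := continuous_uc
  have hint (τ : ℝ) : ψ (uc τ) * Complex.exp (Complex.I * k * (⟪uc τ, x⟫ : ℝ))
      = ∑ m, (((2 * π / Real.log (ℓ / 2) : ℝ) : ℂ) *
            Complex.exp (Complex.I * k * (⟪d, c m⟫ : ℝ)) *
            Complex.exp (Complex.I * k * (⟪uc τ, x - c m⟫ : ℝ))
          + (-(((π * ℓ ^ 2 * k ^ 2 : ℝ) : ℂ) * ((⟪d, tv m⟫ : ℝ) : ℂ) *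
            Complex.exp (Complex.I * k * (⟪d, c m⟫ : ℝ)))) *
            (((⟪uc τ, tv m⟫ : ℝ) : ℂ) *
              Complex.exp (Complex.I * k * (⟪uc τ, x - c m⟫ : ℝ)))) := by
    rw [hψ, Finset.sum_mul]
    refine Finset.sum_congr rfl fun m _ => ?_
    have hexp : Complex.exp (Complex.I * k * (⟪uc τ, x - c m⟫ : ℝ))
        = Complex.exp (-(Complex.I * k * (⟪uc τ, c m⟫ : ℝ))) *
          Complex.exp (Complex.I * k * (⟪uc τ, x⟫ : ℝ)) := by
      rw [← Complex.exp_add, inner_sub_right]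
      push_cast
      ring_nf
    rw [hexp]
    push_cast
    linear_combination (π * ℓ ^ 2 * k ^ 2 * ((⟪d, tv m⟫ : ℝ) : ℂ) *
      Complex.exp (Complex.I * k * (⟪d, c m⟫ : ℝ)) * ((⟪uc τ, tv m⟫ : ℝ) : ℂ) *
      Complex.exp (-(Complex.I * k * (⟪uc τ, c m⟫ : ℝ))) *
      Complex.exp (Complex.I * k * (⟪uc τ, x⟫ : ℝ))) * Complex.I_sq
  simp only [hint]
  rw [intervalIntegral.integral_finsetSum
      (fun m _ => Continuous.intervalIntegrable (by fun_prop) _ _),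
    Finset.mul_sum, Finset.mul_sum, ← Finset.sum_sub_distrib]
  refine Finset.sum_congr rfl fun m _ => ?_
  rw [intervalIntegral.integral_add
      (Continuous.intervalIntegrable (by fun_prop) _ _)
      (Continuous.intervalIntegrable (by fun_prop) _ _),
    intervalIntegral.integral_const_mul, intervalIntegral.integral_const_mul,
    integral_planeWave, integral_inner_mul_planeWave k _ _ (sub_ne_zero.mpr (hx m))]
  push_cast
  ring
end
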